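/- arXiv:1510.04408 — 8 statements merged into one kernel-verified Lean document; each statement's English description precedes it below -/
import Mathlib

section
/- The function F_GCA is a normalized 2-cocycle on Z_n^m with values in k∖{0}: F_GCA(g,0) = F_GCA(0,g) = 1 for all g ∈ Z_n^m, and F_GCA(f,g) · F_GCA(f+g,h) = F_GCA(g,h) · F_GCA(f,g+h) for all f,g,h ∈ Z_n^m. -/
open Finset

/-- The 2-cochain `F_GCA` on `(ℤ/nℤ)^m` defining the generalized Clifford algebra
as a twisted group algebra. -/
noncomputable def Fgca {k : Type*} [Field k] (n m : ℕ) (ω : k) (q : Fin m → k)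
    (g h : Fin m → ZMod n) : k :=
  ω ^ (∑ i : Fin m, ∑ j : Fin m, if j < i then (g i).val * (h j).val else 0) *
    ∏ i : Fin m, q i ^ (((g i).val + (h i).val) / n)

/-!
`F_GCA` is a product of two kinds of cocycles. The power of `ω` is the character `a ↦ ω ^ a` of
`ℤ/nℤ` applied to the bilinear form `∑_{j < i} g_i h_j`, and bimultiplicative functions are
cocycles. The power of `q_i` has as its exponent the carry of `g_i' + h_i'`, and the carries made
while adding three digits sum to `⌊(a' + b' + c') / n⌋`, whatever the bracketing.
-/

/-- Normalized 2-cocycles on an additive monoid `G` for the trivial action, with coefficients in a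
multiplicative monoid `M`. The coefficients need not be invertible, so that functions into a field
`k`, rather than into `kˣ`, are covered. -/
structure IsNormalizedTwoCocycle {G M : Type*} [AddZeroClass G] [MulOneClass M]
    (F : G → G → M) : Prop where
  zero_right : ∀ g, F g 0 = 1
  zero_left : ∀ g, F 0 g = 1
  cocycle : ∀ f g h, F f g * F (f + g) h = F g h * F f (g + h)

namespace IsNormalizedTwoCocycle

theorem comp {G H M : Type*} [AddZeroClass G] [AddZeroClass H] [MulOneClass M]
    {F : G → G → M} (hF : IsNormalizedTwoCocycle F) (φ : H →+ G) :
    IsNormalizedTwoCocycle fun g h ↦ F (φ g) (φ h) where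
  zero_right g := by rw [map_zero, hF.zero_right]
  zero_left g := by rw [map_zero, hF.zero_left]
  cocycle f g h := by rw [map_add, map_add, hF.cocycle]

theorem mul {G M : Type*} [AddZeroClass G] [CommMonoid M] {F F' : G → G → M}
    (hF : IsNormalizedTwoCocycle F) (hF' : IsNormalizedTwoCocycle F') :
    IsNormalizedTwoCocycle fun g h ↦ F g h * F' g h where
  zero_right g := by rw [hF.zero_right, hF'.zero_right, one_mul]
  zero_left g := by rw [hF.zero_left, hF'.zero_left, one_mul]
  cocycle f g h := by
    rw [mul_mul_mul_comm, hF.cocycle, hF'.cocycle, mul_mul_mul_comm]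

theorem prod {ι G M : Type*} [AddZeroClass G] [CommMonoid M] {s : Finset ι}
    {F : ι → G → G → M} (hF : ∀ i ∈ s, IsNormalizedTwoCocycle (F i)) :
    IsNormalizedTwoCocycle fun g h ↦ ∏ i ∈ s, F i g h where
  zero_right g := prod_eq_one fun i hi ↦ (hF i hi).zero_right g
  zero_left g := prod_eq_one fun i hi ↦ (hF i hi).zero_left g
  cocycle f g h := by
    simp only [← prod_mul_distrib]
    exact prod_congr rfl fun i hi ↦ (hF i hi).cocycle f g h

end IsNormalizedTwoCocycle

theorem isNormalizedTwoCocycle_addChar_bilinear {R V P M : Type*} [CommSemiring R]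
    [AddCommMonoid V] [Module R V] [AddCommMonoid P] [Module R P] [Monoid M]
    (ψ : AddChar P M) (B : V →ₗ[R] V →ₗ[R] P) :
    IsNormalizedTwoCocycle fun g h ↦ ψ (B g h) where
  zero_right g := by rw [map_zero, ψ.map_zero_eq_one]
  zero_left g := by rw [LinearMap.map_zero₂, ψ.map_zero_eq_one]
  cocycle f g h := by
    have additive : B f g + B (f + g) h = B g h + B f (g + h) := by
      rw [LinearMap.map_add₂, map_add]
      abel
    rw [← ψ.map_add_eq_mul, additive, ψ.map_add_eq_mul]

theorem div_add_mod_add_div (a b n : ℕ) : a / n + (a % n + b) / n = (a + b) / n := by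
  obtain rfl | hn := n.eq_zero_or_pos
  · simp only [Nat.div_zero]
  · conv_rhs => rw [← Nat.div_add_mod a n, add_assoc, Nat.mul_add_div hn]

theorem zmod_carry_add_carry {n : ℕ} [NeZero n] (a b c : ZMod n) :
    (a.val + b.val) / n + ((a + b).val + c.val) / n = (a.val + b.val + c.val) / n := by
  rw [ZMod.val_add, div_add_mod_add_div]

theorem isNormalizedTwoCocycle_pow_carry {M : Type*} [Monoid M] (n : ℕ) [NeZero n] (x : M) :
    IsNormalizedTwoCocycle fun a b : ZMod n ↦ x ^ ((a.val + b.val) / n) where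
  zero_right a := by rw [ZMod.val_zero, add_zero, Nat.div_eq_of_lt a.val_lt, pow_zero]
  zero_left a := by rw [ZMod.val_zero, zero_add, Nat.div_eq_of_lt a.val_lt, pow_zero]
  cocycle a b c := by
    rw [← pow_add, ← pow_add, zmod_carry_add_carry, add_comm a.val (b + c).val,
      zmod_carry_add_carry, add_comm (b.val + c.val), add_assoc]

/-- The bilinear form `∑_{j < i} g_i h_j`, whose values over `ℤ/nℤ` are the exponents of `ω` in
`F_GCA` modulo `n`. -/
def strictLowerForm (R ι : Type*) [CommSemiring R] [Fintype ι] [LinearOrder ι] :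
    LinearMap.BilinForm R (ι → R) :=
  Matrix.toBilin' (Matrix.of fun i j ↦ if j < i then 1 else 0)

theorem strictLowerForm_apply {R ι : Type*} [CommSemiring R] [Fintype ι] [LinearOrder ι]
    (g h : ι → R) :
    strictLowerForm R ι g h = ∑ i, ∑ j, if j < i then g i * h j else 0 := by
  simp only [strictLowerForm, Matrix.toBilin'_apply, Matrix.of_apply, mul_ite, mul_one, mul_zero,
    ite_mul, zero_mul]

section Fgca

variable {k : Type*} [Field k] {n m : ℕ}

theorem Fgca_eq_zmodChar_mul [NeZero n] {ω : k} (hω : ω ^ n = 1) (q : Fin m → k)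
    (g h : Fin m → ZMod n) :
    Fgca n m ω q g h =
      AddChar.zmodChar n hω (strictLowerForm (ZMod n) (Fin m) g h) *
        ∏ i, q i ^ (((g i).val + (h i).val) / n) := by
  rw [Fgca, ← AddChar.zmodChar_apply' hω, strictLowerForm_apply]
  simp only [Nat.cast_sum, Nat.cast_ite, Nat.cast_mul, ZMod.natCast_zmod_val, Nat.cast_zero]

theorem Fgca_isNormalizedTwoCocycle [NeZero n] {ω : k} (hω : ω ^ n = 1) (q : Fin m → k) :
    IsNormalizedTwoCocycle (Fgca n m ω q) := by
  have omega_part := isNormalizedTwoCocycle_addChar_bilinear (AddChar.zmodChar n hω)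
    (strictLowerForm (ZMod n) (Fin m))
  have carry_part := IsNormalizedTwoCocycle.prod (s := univ) fun i _ ↦
    (isNormalizedTwoCocycle_pow_carry n (q i)).comp (Pi.evalAddMonoidHom (fun _ ↦ ZMod n) i)
  rw [funext₂ (Fgca_eq_zmodChar_mul hω q)]
  exact omega_part.mul carry_part

theorem Fgca_ne_zero {ω : k} (hω : ω ≠ 0) {q : Fin m → k} (hq : ∀ i, q i ≠ 0)
    (g h : Fin m → ZMod n) : Fgca n m ω q g h ≠ 0 :=
  mul_ne_zero (pow_ne_zero _ hω) (prod_ne_zero_iff.mpr fun i _ ↦ pow_ne_zero _ (hq i))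

end Fgca

theorem Fgca_normalized_two_cocycle_general {k : Type*} [Field k] (n m : ℕ) [NeZero n]
    (ω : k) (hω : ω ^ n = 1) (q : Fin m → k) (hq : ∀ i, q i ≠ 0) :
    (∀ g h : Fin m → ZMod n, Fgca n m ω q g h ≠ 0) ∧
    (∀ g : Fin m → ZMod n, Fgca n m ω q g 0 = 1 ∧ Fgca n m ω q 0 g = 1) ∧
    (∀ f g h : Fin m → ZMod n,
      Fgca n m ω q f g * Fgca n m ω q (f + g) h =
        Fgca n m ω q g h * Fgca n m ω q f (g + h)) := by
  have omega_ne_zero : ω ≠ 0 := (IsUnit.of_pow_eq_one hω (NeZero.ne n)).ne_zero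
  have isCocycle := Fgca_isNormalizedTwoCocycle hω q
  exact ⟨Fgca_ne_zero omega_ne_zero hq,
    fun g ↦ ⟨isCocycle.zero_right g, isCocycle.zero_left g⟩, isCocycle.cocycle⟩

/-- `F_GCA` is a normalized 2-cocycle on `(ℤ/nℤ)^m` with values in `k \ {0}`. -/
theorem Fgca_normalized_two_cocycle {k : Type*} [Field k] (n m : ℕ)
    (hn : 2 ≤ n) (hm : 1 ≤ m) (hchar : (n : k) ≠ 0)
    (ω : k) (hω : IsPrimitiveRoot ω n) (q : Fin m → k) (hq : ∀ i, q i ≠ 0) :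
    (∀ g h : Fin m → ZMod n, Fgca n m ω q g h ≠ 0) ∧
    (∀ g : Fin m → ZMod n, Fgca n m ω q g 0 = 1 ∧ Fgca n m ω q 0 g = 1) ∧
    (∀ f g h : Fin m → ZMod n,
      Fgca n m ω q f g * Fgca n m ω q (f + g) h =
        Fgca n m ω q g h * Fgca n m ω q f (g + h)) := by
  have : NeZero n := ⟨by lia⟩
  exact Fgca_normalized_two_cocycle_general n m ω hω.pow_eq_one q hq
end

section
/- For all g,h ∈ Z_n^m one has e^g · e^h = F_GCA(g,h) · e^{g+h}; explicitly, (e_1^{g_1'} ⋯ e_m^{g_m'}) · (e_1^{h_1'} ⋯ e_m^{h_m'}) = ω^{Σ_{1 ≤ j < i ≤ m} g_i' h_j'} · (∏_{i=1}^m q_i^{⌊(g_i' + h_i')/n⌋}) · e_1^{(g_1+h_1)'} ⋯ e_m^{(g_m+h_m)'}. -/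
/-!
Reordering and reduction are separate steps. Reordering needs only the commutation relations:
moving `e j ^ b j` to the left past each `e i ^ a i` with `j < i` gives
`e ^ a * e ^ b = (∏_{j < i} ω i j ^ (a i * b j)) • e ^ (a + b)` for natural exponents. Reduction
needs only `e i ^ n = q i`: dividing each exponent by `n` extracts `q i ^ (a i / n)` and leaves
`a i % n`, which for `a = g' + h'` is the canonical representative of `g + h`.
-/

open Finset

/-- The ordered monomial `e^g = e_1^{g_1'} ⋯ e_m^{g_m'}`. -/
noncomputable def gcaMonomial {A : Type*} [Ring A] (n m : ℕ)
    (e : Fin m → A) (g : Fin m → ZMod n) : A :=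
  (List.ofFn fun i => e i ^ (g i).val).prod

/-- `x` and `y` commute up to the scalar `c`, as generators of a quantum plane do. The scalar is
the factor created by moving `y` to the left past `x`. -/
def QCommute {R M : Type*} [Mul M] [SMul R M] (c : R) (x y : M) : Prop :=
  x * y = c • (y * x)

section QCommute

variable {R M : Type*} [Monoid M]

section Monoid

variable [Monoid R] [MulAction R M] [IsScalarTower R M M] [SMulCommClass R M M]

theorem pow_eq_smul_pow_mod {n : ℕ} {c : R} {x : M} (h : x ^ n = c • (1 : M)) (a : ℕ) :
    x ^ a = c ^ (a / n) • x ^ (a % n) :=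
  calc x ^ a = (x ^ n) ^ (a / n) * x ^ (a % n) := by rw [← pow_mul, ← pow_add, Nat.div_add_mod]
    _ = c ^ (a / n) • x ^ (a % n) := by rw [h, smul_pow, one_pow, smul_one_mul]

variable {c d : R} {x y z : M}

theorem QCommute.mul_right (hy : QCommute c x y) (hz : QCommute d x z) :
    QCommute (c * d) x (y * z) :=
  calc x * (y * z) = c • (y * (x * z)) := by rw [← mul_assoc, hy, smul_mul_assoc, mul_assoc]
    _ = (c * d) • (y * z * x) := by rw [hz, mul_smul_comm, mul_assoc, smul_smul]

theorem QCommute.pow_right (h : QCommute c x y) (b : ℕ) : QCommute (c ^ b) x (y ^ b) := by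
  induction b with
  | zero => simp [QCommute]
  | succ b ih => simpa only [pow_succ] using ih.mul_right h

end Monoid

section CommMonoid

variable [CommMonoid R] [MulAction R M] [IsScalarTower R M M] [SMulCommClass R M M]
  {c d : R} {x y z : M}

theorem QCommute.mul_left (hx : QCommute c x z) (hy : QCommute d y z) :
    QCommute (c * d) (x * y) z :=
  calc x * y * z = d • (x * z * y) := by rw [mul_assoc, hy, mul_smul_comm, mul_assoc]
    _ = (c * d) • (z * (x * y)) := by rw [hx, smul_mul_assoc, mul_assoc, smul_smul, mul_comm d]

theorem QCommute.pow_left (h : QCommute c x y) (a : ℕ) : QCommute (c ^ a) (x ^ a) y := by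
  induction a with
  | zero => simp [QCommute]
  | succ a ih => simpa only [pow_succ] using ih.mul_left h

theorem QCommute.pow_pow (h : QCommute c x y) (a b : ℕ) :
    QCommute (c ^ (a * b)) (x ^ a) (y ^ b) := by
  simpa only [pow_mul] using (h.pow_left a).pow_right b

end CommMonoid

end QCommute

/-- The ordered monomial `e₁ ^ a₁ ⋯ eₘ ^ aₘ` with exponents in `ℕ`, so that products can be
reordered before exponents are reduced modulo `n`. -/
def orderedMonomial {M : Type*} [Monoid M] {m : ℕ} (e : Fin m → M) (a : Fin m → ℕ) : M :=
  (List.ofFn fun i => e i ^ a i).prod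

theorem prod_filter_lt_fin_succ {N : Type*} [CommMonoid N] {m : ℕ}
    (f : Fin (m + 1) → Fin (m + 1) → N) :
    ∏ i, ∏ j with j < i, f i j =
      (∏ i : Fin m, f i.succ 0) * ∏ i : Fin m, ∏ j with j < i, f i.succ j.succ := by
  simp [prod_filter, Fin.prod_univ_succ, prod_mul_distrib]

section OrderedMonomial

variable {M : Type*} [Monoid M] {m : ℕ}

theorem orderedMonomial_fin_zero (e : Fin 0 → M) (a : Fin 0 → ℕ) : orderedMonomial e a = 1 := by
  simp [orderedMonomial]

theorem orderedMonomial_fin_succ (e : Fin (m + 1) → M) (a : Fin (m + 1) → ℕ) :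
    orderedMonomial e a = e 0 ^ a 0 * orderedMonomial (Fin.tail e) (Fin.tail a) := by
  simp only [orderedMonomial, List.ofFn_succ, List.prod_cons, Fin.tail]

variable {R : Type*} [CommMonoid R] [MulAction R M] [IsScalarTower R M M] [SMulCommClass R M M]

theorem QCommute.orderedMonomial_pow {c : Fin m → R} {e : Fin m → M} {y : M}
    (h : ∀ i, QCommute (c i) (e i) y) (a : Fin m → ℕ) (b : ℕ) :
    QCommute (∏ i, c i ^ (a i * b)) (orderedMonomial e a) (y ^ b) := by
  induction m with
  | zero => simp [QCommute, orderedMonomial_fin_zero]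
  | succ m ih =>
    rw [orderedMonomial_fin_succ, Fin.prod_univ_succ]
    exact ((h 0).pow_pow (a 0) b).mul_left (ih (fun i => h i.succ) (Fin.tail a))

theorem orderedMonomial_mul {ω : Fin m → Fin m → R} {e : Fin m → M}
    (h : ∀ i j, j < i → QCommute (ω i j) (e i) (e j)) (a b : Fin m → ℕ) :
    orderedMonomial e a * orderedMonomial e b =
      (∏ i, ∏ j with j < i, ω i j ^ (a i * b j)) • orderedMonomial e (a + b) := by
  induction m with
  | zero => simp [orderedMonomial_fin_zero]
  | succ m ih =>
    set E := orderedMonomial (Fin.tail e)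
    set c := ∏ i : Fin m, ω i.succ 0 ^ (a i.succ * b 0)
    set d := ∏ i : Fin m, ∏ j with j < i, ω i.succ j.succ ^ (a i.succ * b j.succ)
    have tail_mul_head : E (Fin.tail a) * e 0 ^ b 0 = c • (e 0 ^ b 0 * E (Fin.tail a)) :=
      QCommute.orderedMonomial_pow (fun i => h i.succ 0 i.succ_pos) (Fin.tail a) (b 0)
    have tail_mul_tail : E (Fin.tail a) * E (Fin.tail b) = d • E (Fin.tail (a + b)) :=
      ih (fun i j hij => h i.succ j.succ (Fin.succ_lt_succ_iff.2 hij)) (Fin.tail a) (Fin.tail b)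
    calc orderedMonomial e a * orderedMonomial e b
        = e 0 ^ a 0 * (E (Fin.tail a) * e 0 ^ b 0) * E (Fin.tail b) := by
          simp only [orderedMonomial_fin_succ, mul_assoc, E]
      _ = c • (e 0 ^ (a 0 + b 0) * (E (Fin.tail a) * E (Fin.tail b))) := by
          rw [tail_mul_head, mul_smul_comm, smul_mul_assoc, pow_add]
          simp only [mul_assoc]
      _ = (c * d) • (e 0 ^ (a 0 + b 0) * E (Fin.tail (a + b))) := by
          rw [tail_mul_tail, mul_smul_comm, smul_smul]
      _ = _ := by
          rw [prod_filter_lt_fin_succ, orderedMonomial_fin_succ e (a + b), Pi.add_apply]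

theorem orderedMonomial_eq_smul_mod {n : Fin m → ℕ} {q : Fin m → R} {e : Fin m → M}
    (h : ∀ i, e i ^ n i = q i • (1 : M)) (a : Fin m → ℕ) :
    orderedMonomial e a = (∏ i, q i ^ (a i / n i)) • orderedMonomial e fun i => a i % n i := by
  induction m with
  | zero => simp [orderedMonomial_fin_zero]
  | succ m ih =>
    rw [orderedMonomial_fin_succ, pow_eq_smul_pow_mod (h 0),
      ih (e := Fin.tail e) (fun i => h i.succ), smul_mul_smul_comm, Fin.prod_univ_succ,
      orderedMonomial_fin_succ e]
    rfl

end OrderedMonomial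

theorem gcaMonomial_mul_general {R A : Type*} [CommMonoid R] [Ring A] [MulAction R A]
    [IsScalarTower R A A] [SMulCommClass R A A] {n m : ℕ} [NeZero n]
    {ω : Fin m → Fin m → R} {q : Fin m → R} {e : Fin m → A}
    (hpow : ∀ i, e i ^ n = q i • (1 : A))
    (hcomm : ∀ i j, j < i → e i * e j = ω i j • (e j * e i)) (g h : Fin m → ZMod n) :
    gcaMonomial n m e g * gcaMonomial n m e h =
      ((∏ i, ∏ j with j < i, ω i j ^ ((g i).val * (h j).val)) *
        ∏ i, q i ^ (((g i).val + (h i).val) / n)) • gcaMonomial n m e (g + h) := by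
  have val_add : gcaMonomial n m e (g + h) =
      orderedMonomial e fun i => ((g i).val + (h i).val) % n := by
    simp only [gcaMonomial, orderedMonomial, Pi.add_apply, ZMod.val_add]
  calc gcaMonomial n m e g * gcaMonomial n m e h
      = (∏ i, ∏ j with j < i, ω i j ^ ((g i).val * (h j).val)) •
          orderedMonomial e fun i => (g i).val + (h i).val := orderedMonomial_mul hcomm _ _
    _ = _ := by rw [orderedMonomial_eq_smul_mod hpow, smul_smul, val_add]

/-- Products of standard monomials in a generalized Clifford algebra:
`e^g ⬝ e^h = F_GCA(g,h) ⬝ e^{g+h}`. -/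
theorem gcaMonomial_mul {k : Type*} [Field k] {A : Type*} [Ring A] [Algebra k A]
    (n m : ℕ) (hn : 2 ≤ n) (hm : 1 ≤ m) (hchar : (n : k) ≠ 0)
    (ω : k) (hω : IsPrimitiveRoot ω n) (q : Fin m → k) (hq : ∀ i, q i ≠ 0)
    (e : Fin m → A) (hpow : ∀ i, e i ^ n = q i • (1 : A))
    (hcomm : ∀ i j : Fin m, j < i → e i * e j = ω • (e j * e i)) :
    ∀ g h : Fin m → ZMod n,
      gcaMonomial n m e g * gcaMonomial n m e h =
        Fgca n m ω q g h • gcaMonomial n m e (g + h) := by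
  have : NeZero n := ⟨by omega⟩
  simpa only [Fgca, prod_pow_eq_pow_sum, sum_filter] using gcaMonomial_mul_general hpow hcomm
end

section
/- Let C = C^{(n)}(q_1,…,q_m) be the quotient of the free associative unital k-algebra on generators x_1,…,x_m by the two-sided ideal generated by the elements x_i^n − q_i·1 (1 ≤ i ≤ m) and x_i x_j − ω x_j x_i (1 ≤ j < i ≤ m), and let e_i denote the image of x_i in C. Then the n^m standard monomials {e_1^{a_1} e_2^{a_2} ⋯ e_m^{a_m} : 0 ≤ a_i ≤ n−1} form a k-vector space basis of C; in particular dim_k C = n^m. -/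
/-- The defining relations of the generalized Clifford algebra
`C^{(n)}(q_1,…,q_m)`: `x_i^n = q_i·1` and `x_i x_j = ω x_j x_i` for `j < i`.
Quotienting the free algebra by (the two-sided ideal generated by) these
relations yields the generalized Clifford algebra. -/
inductive GCARel (k : Type*) [Field k] (n m : ℕ) (ω : k) (q : Fin m → k) :
    FreeAlgebra k (Fin m) → FreeAlgebra k (Fin m) → Prop
  | pow (i : Fin m) :
      GCARel k n m ω q (FreeAlgebra.ι k i ^ n) (algebraMap k _ (q i))
  | comm (i j : Fin m) (h : j < i) :
      GCARel k n m ω q (FreeAlgebra.ι k i * FreeAlgebra.ι k j)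
        (ω • (FreeAlgebra.ι k j * FreeAlgebra.ι k i))

/-- The generalized Clifford algebra `C^{(n)}(q_1,…,q_m)`. -/
abbrev GCA (k : Type*) [Field k] (n m : ℕ) (ω : k) (q : Fin m → k) : Type _ :=
  RingQuot (GCARel k n m ω q)

/-- The generators `e_i` of the generalized Clifford algebra, i.e., the images of
the free generators `x_i`. -/
noncomputable def GCAgen (k : Type*) [Field k] (n m : ℕ) (ω : k) (q : Fin m → k)
    (i : Fin m) : GCA k n m ω q :=
  RingQuot.mkAlgHom k (GCARel k n m ω q) (FreeAlgebra.ι k i)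


/-!
Moving `e_i` to the right past powers of `e_j` with `j < i` costs only powers of `ω`, and `e_i ^ n`
is a scalar, so the span of the standard monomials is a left ideal containing `1`.

For independence, let `σ : x ↦ ω x` and `τ : multiplication by x` be the clock and shift operators
on `k[x] / (x ^ n - q)`. They satisfy `σ τ = ω τ σ`, `σ ^ n = 1` and `τ ^ n = q`, so
`e_i ↦ σ ⊗ ⋯ ⊗ σ ⊗ τ ⊗ 1 ⊗ ⋯ ⊗ 1` is a representation on `⨂ j, k[x] / (x ^ n - q_j)`. As `σ` fixes
`1`, the monomial with exponents `a` sends `1 ⊗ ⋯ ⊗ 1` to the basis vector `x ^ a_1 ⊗ ⋯ ⊗ x ^ a_m`.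
-/

section OrderedProducts

variable {R A : Type*} [CommSemiring R] [Semiring A] [Algebra R A]

theorem mul_prod_map_le_prod_map {ι M : Type*} [LinearOrder ι] [Monoid M] [Preorder M]
    [MulLeftMono M] [MulRightMono M] {p : ι → M} {g : M} {i : ι} (h_absorb : g * p i ≤ p i)
    (h_swap : ∀ j < i, g * p j ≤ p j * g) {l : List ι} (hl : l.Pairwise (· < ·)) (hi : i ∈ l) :
    g * (l.map p).prod ≤ (l.map p).prod := by
  induction l with
  | nil => simp at hi
  | cons j l ih =>
    rw [List.pairwise_cons] at hl
    rw [List.map_cons, List.prod_cons, ← mul_assoc]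
    rcases List.mem_cons.mp hi with rfl | hil
    · exact mul_le_mul_left h_absorb _
    · calc g * p j * (l.map p).prod
        _ ≤ p j * g * (l.map p).prod := mul_le_mul_left (h_swap j (hl.1 i hil)) _
        _ = p j * (g * (l.map p).prod) := mul_assoc _ _ _
        _ ≤ p j * (l.map p).prod := mul_le_mul_right (ih hl.2 hil) _

theorem prod_ofFn_span_range {m : ℕ} {κ : Fin m → Type*} (f : ∀ i, κ i → A) :
    (List.ofFn fun i => Submodule.span R (Set.range (f i))).prod =
      Submodule.span R (Set.range fun a : ∀ i, κ i => (List.ofFn fun i => f i (a i)).prod) := by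
  induction m with
  | zero => simp [Submodule.one_eq_span]
  | succ m ih =>
    rw [List.ofFn_succ, List.prod_cons, ih, Submodule.span_mul_span]
    congr 1
    ext x
    simp only [Set.mem_mul, Set.mem_range, exists_exists_eq_and, List.ofFn_succ, List.prod_cons]
    exact ⟨fun ⟨b, c, h⟩ => ⟨Fin.cons b c, by simpa using h⟩,
      fun ⟨a, h⟩ => ⟨a 0, fun i => a i.succ, h⟩⟩

theorem eq_top_of_one_mem_of_mul_mem {s : Set A} (hs : Algebra.adjoin R s = ⊤)
    {S : Submodule R A} (h_one : 1 ∈ S) (h_mul : ∀ x ∈ s, ∀ y ∈ S, x * y ∈ S) : S = ⊤ := by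
  rw [← top_le_iff, ← Algebra.top_toSubmodule, ← hs, Algebra.adjoin_eq_span, Submodule.span_le]
  intro x hx
  induction hx using Submonoid.closure_induction_left with
  | one => exact h_one
  | mul_left x hx y _ hy => exact h_mul x hx y hy

variable (R) in
/-- The submodule spanned by the powers `1, x, …, x ^ (n - 1)`. -/
def powerSpan (x : A) (n : ℕ) : Submodule R A :=
  Submodule.span R (Set.range fun a : Fin n => x ^ (a : ℕ))

theorem pow_mem_powerSpan (x : A) {a n : ℕ} (h : a < n) : x ^ a ∈ powerSpan R x n :=
  Submodule.subset_span ⟨⟨a, h⟩, rfl⟩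

theorem one_mem_powerSpan {x : A} {n : ℕ} (hx : x ^ n ∈ powerSpan R x n) :
    1 ∈ powerSpan R x n := by
  rcases n.eq_zero_or_pos with rfl | hn
  · simpa using hx
  · simpa using pow_mem_powerSpan (R := R) x hn

theorem span_singleton_mul_powerSpan_le {x : A} {n : ℕ} (hx : x ^ n ∈ powerSpan R x n) :
    Submodule.span R {x} * powerSpan R x n ≤ powerSpan R x n := by
  conv_lhs => rw [powerSpan, Submodule.span_mul_span]
  rw [Submodule.span_le, Set.singleton_mul]
  rintro _ ⟨_, ⟨a, rfl⟩, rfl⟩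
  change x * x ^ (a : ℕ) ∈ powerSpan R x n
  rw [← pow_succ']
  rcases Nat.lt_or_eq_of_le a.isLt with h | h
  · exact pow_mem_powerSpan x h
  · rwa [show (a : ℕ) + 1 = n from h]

theorem mul_pow_eq_smul_of_mul_eq_smul {ω : R} {x y : A} (h : x * y = ω • (y * x)) (b : ℕ) :
    x * y ^ b = ω ^ b • (y ^ b * x) := by
  have h_semiconj : SemiconjBy x y (ω • y) := by rw [SemiconjBy, h, smul_mul_assoc]
  rw [(h_semiconj.pow_right b).eq, smul_pow, smul_mul_assoc]

theorem span_singleton_mul_powerSpan_le_powerSpan_mul {ω : R} {x y : A}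
    (h : x * y = ω • (y * x)) (n : ℕ) :
    Submodule.span R {x} * powerSpan R y n ≤ powerSpan R y n * Submodule.span R {x} := by
  conv_lhs => rw [powerSpan, Submodule.span_mul_span]
  rw [Submodule.span_le, Set.singleton_mul]
  rintro _ ⟨_, ⟨b, rfl⟩, rfl⟩
  change x * y ^ (b : ℕ) ∈ powerSpan R y n * Submodule.span R {x}
  rw [mul_pow_eq_smul_of_mul_eq_smul h]
  exact Submodule.smul_mem _ _ <| Submodule.mul_mem_mul (pow_mem_powerSpan y b.isLt)
    (Submodule.mem_span_singleton_self x)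

theorem span_ofFn_prod_pow_eq_top {m : ℕ} {n : Fin m → ℕ} {ω : Fin m → Fin m → R}
    {e : Fin m → A} (h_pow : ∀ i, e i ^ n i ∈ powerSpan R (e i) (n i))
    (h_comm : ∀ i j, j < i → e i * e j = ω i j • (e j * e i))
    (h_gen : Algebra.adjoin R (Set.range e) = ⊤) :
    Submodule.span R (Set.range fun a : ∀ i, Fin (n i) =>
      (List.ofFn fun i => e i ^ (a i : ℕ)).prod) = ⊤ := by
  rw [← prod_ofFn_span_range fun i (a : Fin (n i)) => e i ^ (a : ℕ)]
  change (List.ofFn fun i => powerSpan R (e i) (n i)).prod = ⊤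
  rw [List.ofFn_eq_map]
  refine eq_top_of_one_mem_of_mul_mem h_gen ?_ ?_
  · rw [← Submodule.one_le]
    refine List.one_le_prod_of_one_le ?_
    simpa [Submodule.one_le] using fun i => one_mem_powerSpan (h_pow i)
  · rintro _ ⟨i, rfl⟩ y hy
    have h_le := mul_prod_map_le_prod_map (p := fun i => powerSpan R (e i) (n i))
      (span_singleton_mul_powerSpan_le (h_pow i))
      (fun j hj => span_singleton_mul_powerSpan_le_powerSpan_mul (h_comm i j hj) _)
      (List.pairwise_lt_finRange m) (List.mem_finRange i)
    exact h_le (Submodule.mul_mem_mul (Submodule.mem_span_singleton_self _) hy)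

end OrderedProducts

section JordanWigner

variable {ι : Type*} [LinearOrder ι]

/-- The components of the `i`-th Jordan–Wigner element `⋯ ⊗ σ ⊗ σ ⊗ τ ⊗ 1 ⊗ 1 ⊗ ⋯`, whose `τ` stands
in position `i`. It is kept as a family of tensor factors, to be fed to `PiTensorProduct.map`. -/
def jordanWigner {M : ι → Type*} [∀ j, One (M j)] (σ τ : ∀ j, M j) (i j : ι) : M j :=
  if j < i then σ j else if j = i then τ j else 1

section Components

variable {M : ι → Type*} [∀ j, One (M j)] (σ τ : ∀ j, M j) {i j : ι}

theorem jordanWigner_of_lt (h : j < i) : jordanWigner σ τ i j = σ j := if_pos h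

theorem jordanWigner_self : jordanWigner σ τ i i = τ i := by simp [jordanWigner]

theorem jordanWigner_of_gt (h : i < j) : jordanWigner σ τ i j = 1 := by
  simp [jordanWigner, h.not_gt, h.ne']

end Components

theorem jordanWigner_mul_jordanWigner {R : Type*} {M : ι → Type*} [∀ j, Monoid (M j)]
    [∀ j, SMul R (M j)] {σ τ : ∀ j, M j} {ω : R} {i j : ι}
    (hστ : σ j * τ j = ω • (τ j * σ j)) (hji : j < i) :
    jordanWigner σ τ i * jordanWigner σ τ j =
      Function.update (jordanWigner σ τ j * jordanWigner σ τ i) j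
        (ω • (jordanWigner σ τ j * jordanWigner σ τ i) j) := by
  ext l
  rcases lt_trichotomy l j with hlj | rfl | hjl
  · simp [jordanWigner_of_lt, hlj, hlj.trans hji, hlj.ne]
  · simp [jordanWigner_of_lt, jordanWigner_self, hji, hστ]
  · simp [jordanWigner_of_gt, hjl, hjl.ne']

theorem jordanWigner_pow {M : ι → Type*} [∀ j, Monoid (M j)] {σ : ∀ j, M j} (τ : ∀ j, M j)
    {i : ι} {n : ℕ} (hσ : ∀ j < i, σ j ^ n = 1) :
    jordanWigner σ τ i ^ n = Function.update (1 : ∀ j, M j) i (τ i ^ n) := by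
  ext l
  rcases lt_trichotomy l i with hli | rfl | hil
  · simp [jordanWigner_of_lt, hli, hli.ne, hσ]
  · simp [jordanWigner_self]
  · simp [jordanWigner_of_gt, hil, hil.ne']

variable {R : Type*} [CommSemiring R] {V : ι → Type*} [∀ j, AddCommMonoid (V j)]
  [∀ j, Module R (V j)]
  {σ τ : ∀ j, Module.End R (V j)}

theorem map_jordanWigner_mul_map_jordanWigner {ω : R} {i j : ι}
    (hστ : σ j * τ j = ω • (τ j * σ j)) (hji : j < i) :
    PiTensorProduct.map (jordanWigner σ τ i) * PiTensorProduct.map (jordanWigner σ τ j) =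
      ω • (PiTensorProduct.map (jordanWigner σ τ j) *
        PiTensorProduct.map (jordanWigner σ τ i)) := by
  have h_mul := jordanWigner_mul_jordanWigner hστ hji
  have := congrArg PiTensorProduct.map h_mul
  rw [PiTensorProduct.map_update_smul, Function.update_eq_self] at this
  exact (PiTensorProduct.map_mul _ _).symm.trans
    (this.trans (congrArg (ω • ·) (PiTensorProduct.map_mul _ _)))

theorem map_jordanWigner_pow {i : ι} {n : ℕ} {c : R} (hσ : ∀ j < i, σ j ^ n = 1)
    (hτ : τ i ^ n = algebraMap R _ c) :
    PiTensorProduct.map (jordanWigner σ τ i) ^ n = algebraMap R _ c := by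
  rw [← PiTensorProduct.map_pow, jordanWigner_pow τ hσ, hτ, Algebra.algebraMap_eq_smul_one,
    PiTensorProduct.map_update_smul, Algebra.algebraMap_eq_smul_one]
  have h_update : Function.update (1 : ∀ j, Module.End R (V j)) i 1 = 1 :=
    Function.update_eq_self i _
  rw [h_update]
  exact congrArg (c • ·) PiTensorProduct.map_one

theorem prod_map_jordanWigner_pow_apply {v : ∀ j, V j} (hv : ∀ j, σ j (v j) = v j) (a : ι → ℕ)
    {l : List ι} (hl : l.Pairwise (· < ·)) (j : ι) :
    (l.map fun i => jordanWigner σ τ i ^ a i).prod j (v j) =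
      if j ∈ l then (τ j ^ a j) (v j) else v j := by
  induction l with
  | nil => simp
  | cons i l ih =>
    rw [List.pairwise_cons] at hl
    rw [List.map_cons, List.prod_cons, Pi.mul_apply, Module.End.mul_apply, ih hl.2, Pi.pow_apply]
    rcases lt_trichotomy j i with hji | rfl | hij
    · have hjl : j ∉ l := fun h => lt_asymm hji (hl.1 j h)
      have h_fixed : (σ j ^ a i) (v j) = v j := by
        rw [Module.End.pow_apply, Function.iterate_fixed (hv j)]
      simp [jordanWigner_of_lt, hji, hji.ne, hjl, h_fixed]
    · have hjl : j ∉ l := fun h => lt_irrefl j (hl.1 j h)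
      simp [jordanWigner_self, hjl]
    · simp [jordanWigner_of_gt, hij, hij.ne']

theorem prod_ofFn_map_jordanWigner_pow_tprod {m : ℕ} {V : Fin m → Type*}
    [∀ j, AddCommMonoid (V j)] [∀ j, Module R (V j)] {σ τ : ∀ j, Module.End R (V j)}
    {v : ∀ j, V j} (hv : ∀ j, σ j (v j) = v j) (a : Fin m → ℕ) :
    (List.ofFn fun i => PiTensorProduct.map (jordanWigner σ τ i) ^ a i).prod
      (PiTensorProduct.tprod R v) = PiTensorProduct.tprod R fun j => (τ j ^ a j) (v j) := by
  have h_prod : (List.ofFn fun i => PiTensorProduct.map (jordanWigner σ τ i) ^ a i).prod =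
      PiTensorProduct.map ((List.finRange m).map fun i => jordanWigner σ τ i ^ a i).prod := by
    rw [List.ofFn_eq_map]
    simp only [← PiTensorProduct.mapMonoidHom_apply, map_list_prod, List.map_map, map_pow,
      Function.comp_def]
  rw [h_prod, PiTensorProduct.map_tprod]
  congr 1
  ext j
  rw [prod_map_jordanWigner_pow_apply hv a (List.pairwise_lt_finRange m),
    if_pos (List.mem_finRange j)]

end JordanWigner

section ClockShift

open Polynomial TensorProduct

variable {K : Type*} [Field K] {n : ℕ}

/-- The clock operator on `K[X] ⧸ (X ^ n - q)`, the algebra endomorphism scaling the root by `ω`. -/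
noncomputable def clock (ω : rootsOfUnity n K) (q : K) :
    Module.End K (AdjoinRoot (X ^ n - C q)) :=
  AlgHom.toEnd (autAdjoinRootXPowSubCHom n q ω)

/-- The shift operator on `K[X] ⧸ (X ^ n - q)`, multiplication by the root. -/
noncomputable def shift (n : ℕ) (q : K) : Module.End K (AdjoinRoot (X ^ n - C q)) :=
  Algebra.lmul K _ (AdjoinRoot.root _)

theorem clock_one (ω : rootsOfUnity n K) (q : K) : clock ω q 1 = 1 :=
  map_one (autAdjoinRootXPowSubCHom n q ω)

theorem clock_pow_eq_one (ω : rootsOfUnity n K) (q : K) : clock ω q ^ n = 1 := by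
  have h_pow : ω ^ n = 1 := Subtype.ext ω.2
  rw [clock, ← map_pow, ← map_pow, h_pow, map_one, map_one]

theorem clock_mul_shift (ω : rootsOfUnity n K) (q : K) :
    clock ω q * shift n q = ((ω : Kˣ) : K) • (shift n q * clock ω q) := by
  have h_root : autAdjoinRootXPowSubCHom n q ω (AdjoinRoot.root _) =
      ((ω : Kˣ) : K) • AdjoinRoot.root _ :=
    AdjoinRoot.liftAlgHom_root _ (Algebra.ofId K _) ..
  ext x
  simp [clock, shift, h_root]

theorem shift_pow_eq (n : ℕ) (q : K) : shift n q ^ n = algebraMap K _ q := by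
  rw [shift, ← map_pow, root_X_pow_sub_C_pow, ← AdjoinRoot.algebraMap_eq, AlgHom.commutes]

theorem shift_pow_apply_one (n : ℕ) (q : K) (a : ℕ) :
    (shift n q ^ a) 1 = AdjoinRoot.root (X ^ n - C q) ^ a := by
  rw [shift, ← map_pow]
  exact mul_one _

/-- The basis `1, x, …, x ^ (n - 1)` of `K[X] ⧸ (X ^ n - q)`, where `x` is the root. -/
noncomputable def rootPowBasis (hn : n ≠ 0) (q : K) :
    Module.Basis (Fin n) K (AdjoinRoot (X ^ n - C q)) :=
  (AdjoinRoot.powerBasis' (monic_X_pow_sub_C q hn)).basis.reindex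
    (finCongr natDegree_X_pow_sub_C)

theorem rootPowBasis_apply (hn : n ≠ 0) (q : K) (a : Fin n) :
    rootPowBasis hn q a = AdjoinRoot.root _ ^ (a : ℕ) := by
  rw [rootPowBasis, Module.Basis.reindex_apply, PowerBasis.basis_eq_pow]
  rfl

section Representation

variable {ι : Type*} [LinearOrder ι] (ω : rootsOfUnity n K) (q : ι → K)

/-- The `i`-th generator of the clock-and-shift representation on
`⨂ j, K[X] ⧸ (X ^ n - q j)`: the clock in the positions before `i`, the shift in position `i`. -/
noncomputable def clockShift (i : ι) : Module.End K (⨂[K] j, AdjoinRoot (X ^ n - C (q j))) :=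
  PiTensorProduct.map (jordanWigner (fun j => clock ω (q j)) (fun j => shift n (q j)) i)

theorem clockShift_pow_eq (i : ι) : clockShift ω q i ^ n = algebraMap K _ (q i) :=
  map_jordanWigner_pow (fun j _ => clock_pow_eq_one ω (q j)) (shift_pow_eq n (q i))

theorem clockShift_mul_clockShift (i j : ι) (hji : j < i) :
    clockShift ω q i * clockShift ω q j =
      ((ω : Kˣ) : K) • (clockShift ω q j * clockShift ω q i) :=
  map_jordanWigner_mul_map_jordanWigner (clock_mul_shift ω (q j)) hji

end Representation

theorem linearIndependent_ofFn_prod_clockShift_pow {m : ℕ} (hn : n ≠ 0) (ω : rootsOfUnity n K)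
    (q : Fin m → K) :
    LinearIndependent K fun a : Fin m → Fin n =>
      (List.ofFn fun i => clockShift ω q i ^ (a i : ℕ)).prod := by
  apply LinearIndependent.of_comp (LinearMap.applyₗ (PiTensorProduct.tprod K fun _ => 1))
  convert (Basis.piTensorProduct fun j => rootPowBasis hn (q j)).linearIndependent
  ext1 a
  simp only [Basis.piTensorProduct_apply, rootPowBasis_apply, ← shift_pow_apply_one]
  exact prod_ofFn_map_jordanWigner_pow_tprod (fun j => clock_one ω (q j)) _

end ClockShift

namespace GCA

variable {k : Type*} [Field k] {n m : ℕ} {ω : k} {q : Fin m → k}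

theorem gen_pow_eq (i : Fin m) : GCAgen k n m ω q i ^ n = algebraMap k _ (q i) := by
  simpa only [map_pow, AlgHom.commutes, GCAgen] using
    RingQuot.mkAlgHom_rel k (GCARel.pow (n := n) (ω := ω) (q := q) i)

theorem gen_mul_gen (i j : Fin m) (hji : j < i) :
    GCAgen k n m ω q i * GCAgen k n m ω q j =
      ω • (GCAgen k n m ω q j * GCAgen k n m ω q i) := by
  simpa only [map_mul, map_smul, GCAgen] using
    RingQuot.mkAlgHom_rel k (GCARel.comm (n := n) (ω := ω) (q := q) i j hji)

theorem adjoin_range_gen : Algebra.adjoin k (Set.range (GCAgen k n m ω q)) = ⊤ := by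
  change Algebra.adjoin k (Set.range (RingQuot.mkAlgHom k _ ∘ FreeAlgebra.ι k)) = ⊤
  rw [Set.range_comp, ← AlgHom.map_adjoin, FreeAlgebra.adjoin_range_ι, Algebra.map_top,
    AlgHom.range_eq_top]
  exact RingQuot.mkAlgHom_surjective k _

section Lift

variable {A : Type*} [Semiring A] [Algebra k A] {e : Fin m → A}

/-- The universal property of `GCA`: a family in an algebra satisfying the defining relations
extends to an algebra homomorphism. -/
noncomputable def lift (h_pow : ∀ i, e i ^ n = algebraMap k A (q i))
    (h_comm : ∀ i j, j < i → e i * e j = ω • (e j * e i)) : GCA k n m ω q →ₐ[k] A :=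
  RingQuot.liftAlgHom k ⟨FreeAlgebra.lift k e, fun _ _ h => by
    cases h with
    | pow i => simp [h_pow]
    | comm i j hji => simp [h_comm i j hji]⟩

theorem lift_gen (h_pow : ∀ i, e i ^ n = algebraMap k A (q i))
    (h_comm : ∀ i j, j < i → e i * e j = ω • (e j * e i)) (i : Fin m) :
    lift h_pow h_comm (GCAgen k n m ω q i) = e i := by
  simp [lift, GCAgen]

end Lift

theorem linearIndependent_monomials (hn : n ≠ 0) (hω : ω ^ n = 1) (q : Fin m → k) :
    LinearIndependent k fun a : Fin m → Fin n =>
      (List.ofFn fun i => GCAgen k n m ω q i ^ (a i : ℕ)).prod := by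
  have : NeZero n := ⟨hn⟩
  obtain ⟨ζ, rfl⟩ : ∃ ζ : rootsOfUnity n k, ((ζ : kˣ) : k) = ω :=
    ⟨rootsOfUnity.mkOfPowEq ω hω, rfl⟩
  let φ := lift (clockShift_pow_eq ζ q) (clockShift_mul_clockShift ζ q)
  apply LinearIndependent.of_comp φ.toLinearMap
  have h_map : φ.toLinearMap ∘ (fun a : Fin m → Fin n =>
        (List.ofFn fun i => GCAgen k n m _ q i ^ (a i : ℕ)).prod) =
      fun a => (List.ofFn fun i => clockShift ζ q i ^ (a i : ℕ)).prod := by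
    ext1 a
    simp [φ, map_list_prod, List.map_ofFn, Function.comp_def, lift_gen]
  rw [h_map]
  exact linearIndependent_ofFn_prod_clockShift_pow hn ζ q

theorem span_monomials_eq_top (hn : n ≠ 0) :
    Submodule.span k (Set.range fun a : Fin m → Fin n =>
      (List.ofFn fun i => GCAgen k n m ω q i ^ (a i : ℕ)).prod) = ⊤ := by
  refine span_ofFn_prod_pow_eq_top (ω := fun _ _ => ω) (fun i => ?_) gen_mul_gen adjoin_range_gen
  rw [gen_pow_eq, Algebra.algebraMap_eq_smul_one, ← pow_zero (GCAgen k n m ω q i)]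
  exact Submodule.smul_mem _ _ (pow_mem_powerSpan _ hn.pos)

end GCA

theorem gca_monomials_basis_general {k : Type*} [Field k] {n m : ℕ} (hn : n ≠ 0) {ω : k}
    (hω : ω ^ n = 1) (q : Fin m → k) :
    LinearIndependent k (fun a : Fin m → Fin n =>
      (List.ofFn fun i => GCAgen k n m ω q i ^ (a i : ℕ)).prod) ∧
    Submodule.span k (Set.range (fun a : Fin m → Fin n =>
      (List.ofFn fun i => GCAgen k n m ω q i ^ (a i : ℕ)).prod)) = ⊤ ∧
    Module.finrank k (GCA k n m ω q) = n ^ m := by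
  have h_indep := GCA.linearIndependent_monomials hn hω q
  have h_span := GCA.span_monomials_eq_top (ω := ω) (q := q) hn
  refine ⟨h_indep, h_span, ?_⟩
  rw [Module.finrank_eq_card_basis (Module.Basis.mk h_indep h_span.ge)]
  simp

/-- The `n^m` standard monomials `e_1^{a_1} ⋯ e_m^{a_m}` with `0 ≤ a_i ≤ n-1`
form a `k`-basis of the generalized Clifford algebra `C^{(n)}(q_1,…,q_m)`;
in particular its dimension is `n^m`. -/
theorem gca_monomials_basis {k : Type*} [Field k] (n m : ℕ)
    (hn : 2 ≤ n) (hm : 1 ≤ m) (hchar : (n : k) ≠ 0)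
    (ω : k) (hω : IsPrimitiveRoot ω n) (q : Fin m → k) (hq : ∀ i, q i ≠ 0) :
    LinearIndependent k (fun a : Fin m → Fin n =>
      (List.ofFn fun i => GCAgen k n m ω q i ^ (a i : ℕ)).prod) ∧
    Submodule.span k (Set.range (fun a : Fin m → Fin n =>
      (List.ofFn fun i => GCAgen k n m ω q i ^ (a i : ℕ)).prod)) = ⊤ ∧
    Module.finrank k (GCA k n m ω q) = n ^ m :=
  gca_monomials_basis_general (by lia) hω.pow_eq_one q
end

section
/- Let n ≥ 2 be an integer and k a field in which n is invertible. Suppose δ : Z/nZ × Z/nZ → k and ε₀ ∈ k satisfy: (i) ε₀ · δ(i,0) = 1 = ε₀ · δ(0,i) for all i ∈ Z/nZ; (ii) δ(k, i+j−k) = Σ_{l ∈ Z/nZ} δ(l, i−l) · δ(k−l, j+l−k) for all i,j,k ∈ Z/nZ; (iii) δ(i, j−i) = δ(i, −i) for all i,j ∈ Z/nZ. Then δ(i,j) = 1/n for all i,j ∈ Z/nZ, and ε₀ = n. (This is the uniqueness of the weak Hopf structure on the group algebra k[Z/nZ].) -/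
open Finset

/-!
The weak unit condition (iii) forces every row `δ i` to be constant, so by the counit condition (i)
every value of `δ` is inverse to `ε₀`. Inverses being unique, `δ` is a single constant `c`.
At the identity element the multiplicativity condition (ii) then reads `c = n * (c * c)`, and
cancelling `c` gives `ε₀ = n`.
-/

theorem apply_eq_apply_of_forall_sub_eq_neg {G α : Type*} [AddGroup G] {f : G → α} {a : G}
    (h : ∀ j, f (j - a) = f (-a)) (x y : G) : f x = f y := by
  have eq_neg (z : G) : f z = f (-a) := by simpa using h (z + a)
  rw [eq_neg x, eq_neg y]

theorem eq_of_mul_eq_one_of_mul_mul_self_eq {M : Type*} [Monoid M] {a c e : M}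
    (hea : Commute e a) (hec : e * c = 1) (hacc : a * (c * c) = c) : e = a := by
  have hac : a * c = 1 :=
    calc
      a * c = a * (e * c * c) := by rw [hec, one_mul]
      _ = e * (a * (c * c)) := by rw [mul_assoc e, hea.left_comm]
      _ = 1 := by rw [hacc, hec]
  calc
    e = e * (a * c) := by rw [hac, mul_one]
    _ = a * (e * c) := hea.left_comm c
    _ = a := by rw [hec, mul_one]

theorem exists_mul_eq_one_and_forall_eq {M G : Type*} [Monoid M] [IsDedekindFiniteMonoid M]
    [AddGroup G] {δ : G → G → M} {ε₀ : M} (hcounit : ∀ i, ε₀ * δ i 0 = 1)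
    (hweak : ∀ i j, δ i (j - i) = δ i (-i)) : ∃ c, ε₀ * c = 1 ∧ ∀ i j, δ i j = c := by
  have mul_eq_one (i j : G) : ε₀ * δ i j = 1 := by
    rw [apply_eq_apply_of_forall_sub_eq_neg (hweak i) j 0, hcounit]
  exact ⟨δ 0 0, hcounit 0, fun i j ↦
    left_inv_eq_right_inv (mul_eq_one_symm (mul_eq_one i j)) (hcounit 0)⟩

theorem weakHopf_unique_ZMod_general {R G : Type*} [Semiring R] [IsDedekindFiniteMonoid R]
    [AddGroup G] [Fintype G] (δ : G → G → R) (ε₀ : R) (hcounit : ∀ i, ε₀ * δ i 0 = 1)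
    (hmul : δ 0 0 = ∑ l, δ l (-l) * δ (-l) l) (hweak : ∀ i j, δ i (j - i) = δ i (-i)) :
    (∀ i j, (Fintype.card G : R) * δ i j = 1) ∧ ε₀ = Fintype.card G := by
  obtain ⟨c, hεc, hδ⟩ := exists_mul_eq_one_and_forall_eq hcounit hweak
  have card_mul : (Fintype.card G : R) * (c * c) = c := by
    simpa only [hδ, sum_const, card_univ, nsmul_eq_mul] using hmul.symm
  have hε : ε₀ = Fintype.card G :=
    eq_of_mul_eq_one_of_mul_mul_self_eq (Nat.commute_cast _ _) hεc card_mul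
  exact ⟨fun i j ↦ by rw [hδ, ← hε, hεc], hε⟩

/-- Uniqueness of the weak Hopf structure on the group algebra `k[ℤ/nℤ]`:
any pair `(δ, ε₀)` satisfying the counitary condition, the multiplicativity
condition and the weak unit condition must be the constant `1/n` together with
`ε₀ = n`. -/
theorem weakHopf_unique_ZMod {k : Type*} [Field k] (n : ℕ)
    (hn : 2 ≤ n) (hchar : (n : k) ≠ 0) [NeZero n]
    (δ : ZMod n → ZMod n → k) (ε₀ : k)
    (hcounit : ∀ i : ZMod n, ε₀ * δ i 0 = 1 ∧ ε₀ * δ 0 i = 1)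
    (hmul : ∀ i j K : ZMod n,
      δ K (i + j - K) = ∑ l : ZMod n, δ l (i - l) * δ (K - l) (j + l - K))
    (hweak : ∀ i j : ZMod n, δ i (j - i) = δ i (-i)) :
    (∀ i j : ZMod n, δ i j = (n : k)⁻¹) ∧ ε₀ = (n : k) := by
  have h := weakHopf_unique_ZMod_general δ ε₀ (fun i ↦ (hcounit i).1)
    (by simpa using hmul 0 0 0) hweak
  rw [ZMod.card] at h
  exact ⟨fun i j ↦ eq_inv_of_mul_eq_one_right (h.1 i j), h.2⟩
end

section
/- Let n ≥ 2 and m ≥ 1 be integers and k a field in which n is invertible. Suppose δ : Z_n^m × Z_n^m → k and ε₀ ∈ k satisfy: (i) ε₀ · δ(g,0) = 1 = ε₀ · δ(0,g) for all g ∈ Z_n^m; (ii) δ(h, f+g−h) = Σ_{l ∈ Z_n^m} δ(l, f−l) · δ(h−l, g+l−h) for all f,g,h ∈ Z_n^m; (iii) δ(g, h−g) = δ(g, −g) for all g,h ∈ Z_n^m. Then δ(g,h) = 1/n^m for all g,h ∈ Z_n^m, and ε₀ = n^m. (This is the uniqueness of the weak Hopf structure on the group algebra k[Z_n^m].) -/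
open Finset

section WeakHopf

variable {G : Type*} [AddGroup G]

lemma apply_eq_apply_zero_of_weakUnit {α : Type*} {δ : G → G → α}
    (hweak : ∀ g h, δ g (h - g) = δ g (-g)) (g h : G) : δ g h = δ g 0 :=
  calc
    δ g h = δ g (h + g - g) := by rw [add_sub_cancel_right]
    _ = δ g (-g) := hweak g (h + g)
    _ = δ g (g - g) := (hweak g g).symm
    _ = δ g 0 := by rw [sub_self]

lemma apply_eq_inv_of_counit_of_weakUnit {M : Type*} [DivisionMonoid M] {δ : G → G → M} {ε₀ : M}
    (hcounit : ∀ g, ε₀ * δ g 0 = 1) (hweak : ∀ g h, δ g (h - g) = δ g (-g)) (g h : G) :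
    δ g h = ε₀⁻¹ :=
  (apply_eq_apply_zero_of_weakUnit hweak g h).trans (eq_inv_of_mul_eq_one_right (hcounit g))

lemma eq_of_inv_eq_mul_inv_mul_inv {M : Type*} [GroupWithZero M] {a b : M} (ha : a ≠ 0)
    (h : a⁻¹ = b * (a⁻¹ * a⁻¹)) : a = b :=
  calc
    a = a⁻¹ * (a * a) := (inv_mul_cancel_left₀ ha a).symm
    _ = b * (a⁻¹ * a⁻¹) * (a * a) := by rw [← h]
    _ = b := by simp [mul_assoc, ha]

theorem weakHopf_unique_ZModPow_general [Fintype G] {k : Type*} [DivisionRing k]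
    (δ : G → G → k) (ε₀ : k) (hcounit : ∀ g, ε₀ * δ g 0 = 1)
    (hmul : ∀ f g h, δ h (f + g - h) = ∑ l, δ l (f - l) * δ (h - l) (g + l - h))
    (hweak : ∀ g h, δ g (h - g) = δ g (-g)) :
    (∀ g h, δ g h = (Fintype.card G : k)⁻¹) ∧ ε₀ = Fintype.card G := by
  have hδ := apply_eq_inv_of_counit_of_weakUnit hcounit hweak
  have hε₀ : ε₀ ≠ 0 := left_ne_zero_of_mul_eq_one (hcounit 0)
  have hinv : ε₀⁻¹ = Fintype.card G * (ε₀⁻¹ * ε₀⁻¹) := by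
    simpa only [hδ, sum_const, card_univ, nsmul_eq_mul] using hmul 0 0 0
  have hcard : ε₀ = Fintype.card G := eq_of_inv_eq_mul_inv_mul_inv hε₀ hinv
  exact ⟨fun g h => hcard ▸ hδ g h, hcard⟩

end WeakHopf

/-- Uniqueness of the weak Hopf structure on the group algebra `k[(ℤ/nℤ)^m]`:
any pair `(δ, ε₀)` satisfying the counitary condition, the multiplicativity
condition and the weak unit condition must be the constant `1/n^m` together
with `ε₀ = n^m`. -/
theorem weakHopf_unique_ZModPow {k : Type*} [Field k] (n m : ℕ)
    (hn : 2 ≤ n) (hm : 1 ≤ m) (hchar : (n : k) ≠ 0) [NeZero n]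
    (δ : (Fin m → ZMod n) → (Fin m → ZMod n) → k) (ε₀ : k)
    (hcounit : ∀ g : Fin m → ZMod n, ε₀ * δ g 0 = 1 ∧ ε₀ * δ 0 g = 1)
    (hmul : ∀ f g h : Fin m → ZMod n,
      δ h (f + g - h) = ∑ l : Fin m → ZMod n, δ l (f - l) * δ (h - l) (g + l - h))
    (hweak : ∀ g h : Fin m → ZMod n, δ g (h - g) = δ g (-g)) :
    (∀ g h : Fin m → ZMod n, δ g h = ((n : k) ^ m)⁻¹) ∧ ε₀ = (n : k) ^ m := by
  simpa using
    weakHopf_unique_ZModPow_general δ ε₀ (fun g => (hcounit g).1) hmul hweak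
end

section
/- The map Δ is multiplicative: Δ(x·y) = Δ(x)·Δ(y) for all x,y ∈ A, where A ⊗_k A carries the usual tensor product algebra structure. (Nevertheless Δ(1) = n^{−m} Σ_{h ∈ G} u_h ⊗ u_{−h} ≠ 1 ⊗ 1, so Δ is not unit-preserving.) -/
open Finset
open scoped TensorProduct

/-!
The element `e = Δ 1 = |G|⁻¹ ∑ h, u_h ⊗ u_{-h}` is a separability idempotent of the group
algebra: `(x ⊗ 1) e = (1 ⊗ x) e` for all `x`, and the multiplication `μ` sends `e` to `1`. Hence
`t e = (1 ⊗ μ t) e` for every tensor `t`, and `t = e` gives `e * e = e`. Since `Δ x = (1 ⊗ x) e`,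
multiplicativity of `Δ` is the idempotency of `e`. If `e` were `1 ⊗ 1`, then `u_g ⊗ 1 = 1 ⊗ u_g`,
and applying the augmentation to the second factor would give `u_g = 1` for all `g`.
-/

theorem eq_algebraMap_of_tmul_one_eq_one_tmul {R A : Type*} [CommSemiring R] [Semiring A]
    [Algebra R A] (ε : A →ₐ[R] R) {a : A} (ha : a ⊗ₜ[R] (1 : A) = 1 ⊗ₜ[R] a) :
    a = algebraMap R A (ε a) := by
  have haug := congrArg ((TensorProduct.rid R A).toLinearMap ∘ₗ ε.toLinearMap.lTensor A) ha
  simpa [Algebra.algebraMap_eq_smul_one] using haug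

section SeparabilityIdempotent

variable {R A : Type*} [CommSemiring R] [CommSemiring A] [Algebra R A]

/-- `e` is a separability idempotent of the commutative `R`-algebra `A`: a tensor that intertwines
the two `A`-module structures of `A ⊗[R] A` and is sent to `1` by multiplication. As `A` is
commutative, both module structures are given by left multiplication. -/
structure IsSeparabilityIdempotent (e : A ⊗[R] A) : Prop where
  tmul_one_mul (a : A) : (a ⊗ₜ[R] 1) * e = (1 ⊗ₜ[R] a) * e
  mul'_eq_one : LinearMap.mul' R A e = 1

namespace IsSeparabilityIdempotent

variable {e : A ⊗[R] A}

theorem mul_eq_one_tmul_mul (he : IsSeparabilityIdempotent e) (t : A ⊗[R] A) :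
    t * e = (1 ⊗ₜ[R] LinearMap.mul' R A t) * e := by
  induction t with
  | zero => simp only [zero_mul, map_zero, TensorProduct.tmul_zero]
  | add s t hs ht => rw [add_mul, hs, ht, map_add, TensorProduct.tmul_add, add_mul]
  | tmul a b =>
    calc (a ⊗ₜ[R] b) * e = (1 ⊗ₜ[R] b) * ((a ⊗ₜ[R] 1) * e) := by
          rw [← mul_assoc, Algebra.TensorProduct.tmul_mul_tmul, one_mul, mul_one]
      _ = (1 ⊗ₜ[R] b) * ((1 ⊗ₜ[R] a) * e) := by rw [he.tmul_one_mul]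
      _ = (1 ⊗ₜ[R] LinearMap.mul' R A (a ⊗ₜ[R] b)) * e := by
          rw [← mul_assoc, Algebra.TensorProduct.tmul_mul_tmul, one_mul, LinearMap.mul'_apply,
            mul_comm b a]

theorem isIdempotentElem (he : IsSeparabilityIdempotent e) : IsIdempotentElem e := by
  rw [IsIdempotentElem, he.mul_eq_one_tmul_mul e, he.mul'_eq_one,
    ← Algebra.TensorProduct.one_def, one_mul]

end IsSeparabilityIdempotent

end SeparabilityIdempotent

section GroupAlgebra

open AddMonoidAlgebra (single)

variable {R G : Type*} [CommSemiring R] [AddCommGroup G] [Fintype G]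

variable (G) in
/-- The element `c ∑ h, u_h ⊗ u_{-h}` of `R[G] ⊗ R[G]`, which is a separability idempotent of the
group algebra when `c` is inverse to the order of `G`. The scalar `c` is a parameter so that no
division is needed in `R`. -/
noncomputable def groupSeparabilityElement (c : R) :
    AddMonoidAlgebra R G ⊗[R] AddMonoidAlgebra R G :=
  c • ∑ h : G, single h (1 : R) ⊗ₜ[R] single (-h) (1 : R)

theorem one_tmul_single_mul_groupSeparabilityElement (c : R) (g : G) :
    (1 ⊗ₜ[R] single g 1) * groupSeparabilityElement G c =
      c • ∑ h : G, single h (1 : R) ⊗ₜ[R] single (g - h) (1 : R) := by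
  simp only [groupSeparabilityElement, mul_smul_comm, mul_sum,
    Algebra.TensorProduct.tmul_mul_tmul, one_mul, AddMonoidAlgebra.single_mul_single,
    ← sub_eq_add_neg]

theorem single_tmul_one_mul_groupSeparabilityElement (c : R) (g : G) :
    (single g 1 ⊗ₜ[R] 1) * groupSeparabilityElement G c =
      c • ∑ h : G, single h (1 : R) ⊗ₜ[R] single (g - h) (1 : R) := by
  simp only [groupSeparabilityElement, mul_smul_comm, mul_sum,
    Algebra.TensorProduct.tmul_mul_tmul, one_mul, AddMonoidAlgebra.single_mul_single]
  congr 1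
  refine Fintype.sum_equiv (Equiv.addLeft g) _ _ fun h => ?_
  rw [Equiv.coe_addLeft, sub_add_cancel_left]

theorem eq_one_tmul_mul_groupSeparabilityElement {c : R}
    {Δ : AddMonoidAlgebra R G →ₗ[R] AddMonoidAlgebra R G ⊗[R] AddMonoidAlgebra R G}
    (hΔ : ∀ g : G, Δ (single g 1) =
      c • ∑ h : G, single h (1 : R) ⊗ₜ[R] single (g - h) (1 : R))
    (x : AddMonoidAlgebra R G) : Δ x = (1 ⊗ₜ[R] x) * groupSeparabilityElement G c := by
  have hlin : Δ = LinearMap.mulRight R (groupSeparabilityElement G c) ∘ₗ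
      TensorProduct.mk R _ _ 1 := by
    ext g
    exact (hΔ g).trans (one_tmul_single_mul_groupSeparabilityElement c g).symm
  exact LinearMap.congr_fun hlin x

theorem tmul_one_mul_groupSeparabilityElement (c : R) (x : AddMonoidAlgebra R G) :
    (x ⊗ₜ[R] 1) * groupSeparabilityElement G c = (1 ⊗ₜ[R] x) * groupSeparabilityElement G c :=
  eq_one_tmul_mul_groupSeparabilityElement
    (Δ := LinearMap.mulRight R (groupSeparabilityElement G c) ∘ₗ (TensorProduct.mk R _ _).flip 1)
    (single_tmul_one_mul_groupSeparabilityElement c) x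

theorem mul'_groupSeparabilityElement (c : R) :
    LinearMap.mul' R (AddMonoidAlgebra R G) (groupSeparabilityElement G c) =
      (c * Fintype.card G) • 1 := by
  simp only [groupSeparabilityElement, map_smul, map_sum, LinearMap.mul'_apply,
    AddMonoidAlgebra.single_mul_single, add_neg_cancel, one_mul, ← AddMonoidAlgebra.one_def,
    sum_const, card_univ, ← Nat.cast_smul_eq_nsmul R, smul_smul]

theorem isSeparabilityIdempotent_groupSeparabilityElement {c : R} (hc : c * Fintype.card G = 1) :
    IsSeparabilityIdempotent (groupSeparabilityElement G c) where
  tmul_one_mul := tmul_one_mul_groupSeparabilityElement c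
  mul'_eq_one := by rw [mul'_groupSeparabilityElement, hc, one_smul]

theorem groupSeparabilityElement_ne_one [Nontrivial R] [Nontrivial G] (c : R) :
    groupSeparabilityElement G c ≠ 1 := by
  intro h
  obtain ⟨g, hg⟩ := exists_ne (0 : G)
  let augmentation : AddMonoidAlgebra R G →ₐ[R] R := AddMonoidAlgebra.lift R R G 1
  have haug : augmentation (single g 1) = 1 := by simp [augmentation]
  have hswap : single g (1 : R) ⊗ₜ[R] (1 : AddMonoidAlgebra R G) = 1 ⊗ₜ[R] single g (1 : R) := by
    simpa only [h, mul_one] using tmul_one_mul_groupSeparabilityElement c (single g 1)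
  have hsingle : single g (1 : R) = single 0 1 := by
    rw [eq_algebraMap_of_tmul_one_eq_one_tmul augmentation hswap, haug, map_one,
      AddMonoidAlgebra.one_def]
  exact hg (AddMonoidAlgebra.single_left_injective one_ne_zero hsingle)

theorem groupAlgebra_comul_multiplicative_general [Nontrivial R] [Nontrivial G] {c : R}
    (hc : c * Fintype.card G = 1)
    (Δ : AddMonoidAlgebra R G →ₗ[R] AddMonoidAlgebra R G ⊗[R] AddMonoidAlgebra R G)
    (hΔ : ∀ g : G, Δ (single g 1) =
      c • ∑ h : G, single h (1 : R) ⊗ₜ[R] single (g - h) (1 : R)) :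
    (∀ x y : AddMonoidAlgebra R G, Δ (x * y) = Δ x * Δ y) ∧
    Δ 1 = c • ∑ h : G, single h (1 : R) ⊗ₜ[R] single (-h) (1 : R) ∧
    Δ 1 ≠ 1 := by
  have hΔ_eq := eq_one_tmul_mul_groupSeparabilityElement hΔ
  have hΔ_one : Δ 1 = groupSeparabilityElement G c := by
    rw [hΔ_eq, ← Algebra.TensorProduct.one_def, one_mul]
  refine ⟨fun x y => ?_, hΔ_one, hΔ_one ▸ groupSeparabilityElement_ne_one c⟩
  have he : IsIdempotentElem (groupSeparabilityElement G c) :=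
    (isSeparabilityIdempotent_groupSeparabilityElement hc).isIdempotentElem
  rw [hΔ_eq, hΔ_eq x, hΔ_eq y, mul_mul_mul_comm, he.eq, Algebra.TensorProduct.tmul_mul_tmul,
    one_mul]

end GroupAlgebra

/-- The comultiplication `Δ(u_g) = n^{-m} Σ_h u_h ⊗ u_{g-h}` on the group algebra
`k[(ℤ/nℤ)^m]` is multiplicative, but not unit-preserving:
`Δ(1) = n^{-m} Σ_h u_h ⊗ u_{-h} ≠ 1 ⊗ 1`. -/
theorem groupAlgebra_comul_multiplicative {k : Type*} [Field k] (n m : ℕ)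
    (hn : 2 ≤ n) (hm : 1 ≤ m) (hchar : (n : k) ≠ 0) [NeZero n]
    (Δ : AddMonoidAlgebra k (Fin m → ZMod n) →ₗ[k]
      AddMonoidAlgebra k (Fin m → ZMod n) ⊗[k] AddMonoidAlgebra k (Fin m → ZMod n))
    (hΔ : ∀ g : Fin m → ZMod n,
      Δ (AddMonoidAlgebra.single g 1) = ((n : k) ^ m)⁻¹ •
        ∑ h : Fin m → ZMod n,
          AddMonoidAlgebra.single h (1 : k) ⊗ₜ[k]
            AddMonoidAlgebra.single (g - h) (1 : k)) :
    (∀ x y : AddMonoidAlgebra k (Fin m → ZMod n), Δ (x * y) = Δ x * Δ y) ∧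
    Δ 1 = ((n : k) ^ m)⁻¹ •
      ∑ h : Fin m → ZMod n,
        AddMonoidAlgebra.single h (1 : k) ⊗ₜ[k]
          AddMonoidAlgebra.single (-h) (1 : k) ∧
    Δ 1 ≠ 1 := by
  have : Fact (1 < n) := ⟨hn⟩
  have : Nonempty (Fin m) := ⟨⟨0, hm⟩⟩
  exact groupAlgebra_comul_multiplicative_general (by simp [hchar]) Δ hΔ
end

section
/- The counit ε satisfies the weak bialgebra counit identity: for all f,g,h ∈ G, ε((u_f · u_g) · u_h) = n^{−m} Σ_{l ∈ G} ε(u_f · u_l) · ε(u_{g−l} · u_h). -/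
open Finset

/-!
On `R[G]`, a functional `ε` with `ε (u_g) = c δ_{g,0}` is `c` times the coefficient at `0`, so the
form `(x, y) ↦ ε (x y)` makes `(u_l)` and `(u_{-l})` dual bases up to the factor `c`. Expanding `x`
along them gives `c ε(x y) = Σ_l ε(x u_l) ε(u_{-l} y)`, and the weak counit identity is the case
`y = u_g z`.
-/

section CoeffZeroFunctional

open scoped AddMonoidAlgebra
open AddMonoidAlgebra (single)

variable {R G : Type*}

theorem linearMap_apply_eq_coeff_zero_mul [Semiring R] [Zero G] [DecidableEq G] {c : R}
    {ε : R[G] →ₗ[R] R} (hε : ∀ g, ε (single g 1) = if g = 0 then c else 0) (x : R[G]) :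
    ε x = x.coeff 0 * c := by
  induction x using AddMonoidAlgebra.induction_linear with
  | zero => simp
  | add x y hx hy => simp [hx, hy, add_mul]
  | single g r =>
    have hsingle : (single g r : R[G]) = r • single g 1 := by simp
    rw [hsingle, map_smul, hε]
    simp [Finsupp.single_apply]

theorem coeff_mul_zero_eq_finsum [Semiring R] [AddGroup G] (x y : R[G]) :
    (x * y).coeff 0 = ∑ᶠ l, x.coeff (-l) * y.coeff l := by
  have hsupport : (fun a ↦ x.coeff a * y.coeff (-a)).support ⊆ x.coeff.support := by
    intro a ha
    simpa using left_ne_zero_of_mul ha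
  calc (x * y).coeff 0 = x.coeff.sum fun a r ↦ r * y.coeff (-a) := by
        simp [AddMonoidAlgebra.coeff_mul_apply_left]
    _ = ∑ᶠ a, x.coeff a * y.coeff (-a) := (finsum_eq_sum_of_support_subset _ hsupport).symm
    _ = ∑ᶠ l, x.coeff (-l) * y.coeff l := by
        simpa using (finsum_comp_equiv (Equiv.neg G)
          (f := fun a ↦ x.coeff a * y.coeff (-a))).symm

variable [CommSemiring R] [AddGroup G] [DecidableEq G] {c : R} {ε : R[G] →ₗ[R] R}

theorem mul_linearMap_mul_eq_finsum
    (hε : ∀ g, ε (single g 1) = if g = 0 then c else 0) (x y : R[G]) :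
    c * ε (x * y) = ∑ᶠ l, ε (x * single l 1) * ε (single (-l) 1 * y) := by
  have hfinite : (fun l ↦ x.coeff (-l) * y.coeff l).HasFiniteSupport :=
    y.coeff.hasFiniteSupport.subset fun l hl ↦ right_ne_zero_of_mul hl
  have hterm (l : G) : ε (x * single l 1) * ε (single (-l) 1 * y) =
      c * c * (x.coeff (-l) * y.coeff l) := by
    rw [linearMap_apply_eq_coeff_zero_mul hε, linearMap_apply_eq_coeff_zero_mul hε,
      mul_mul_mul_comm, mul_comm]
    simp
  calc c * ε (x * y) = c * c * (x * y).coeff 0 := by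
        rw [linearMap_apply_eq_coeff_zero_mul hε, mul_comm _ c, mul_assoc]
    _ = ∑ᶠ l, c * c * (x.coeff (-l) * y.coeff l) := by
        rw [coeff_mul_zero_eq_finsum, mul_finsum' _ _ hfinite]
    _ = ∑ᶠ l, ε (x * single l 1) * ε (single (-l) 1 * y) := by simp_rw [hterm]

theorem groupAlgebra_weak_counit_general
    (hε : ∀ g, ε (single g 1) = if g = 0 then c else 0) (x z : R[G]) (g : G) :
    c * ε (x * single g 1 * z) = ∑ᶠ l, ε (x * single l 1) * ε (single (-l + g) 1 * z) := by
  have hshift (l : G) : (single (-l + g) 1 * z : R[G]) = single (-l) 1 * (single g 1 * z) := by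
    rw [← mul_assoc, AddMonoidAlgebra.single_mul_single, mul_one]
  simp_rw [mul_assoc x, hshift]
  exact mul_linearMap_mul_eq_finsum hε x (single g 1 * z)

end CoeffZeroFunctional

/-- The counit `ε(u_g) = n^m δ_{g,0}` on the group algebra `k[(ℤ/nℤ)^m]`
satisfies the weak bialgebra counit identity
`ε((u_f u_g) u_h) = n^{-m} Σ_l ε(u_f u_l) ε(u_{g-l} u_h)`. -/
theorem groupAlgebra_weak_counit {k : Type*} [Field k] (n m : ℕ)
    (hn : 2 ≤ n) (hm : 1 ≤ m) (hchar : (n : k) ≠ 0) [NeZero n]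
    (ε : AddMonoidAlgebra k (Fin m → ZMod n) →ₗ[k] k)
    (hε : ∀ g : Fin m → ZMod n,
      ε (AddMonoidAlgebra.single g 1) = if g = 0 then (n : k) ^ m else 0) :
    ∀ f g h : Fin m → ZMod n,
      ε ((AddMonoidAlgebra.single f (1 : k) * AddMonoidAlgebra.single g 1) *
          AddMonoidAlgebra.single h 1) =
        ((n : k) ^ m)⁻¹ * ∑ l : Fin m → ZMod n,
          ε (AddMonoidAlgebra.single f (1 : k) * AddMonoidAlgebra.single l 1) *
            ε (AddMonoidAlgebra.single (g - l) (1 : k) *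
              AddMonoidAlgebra.single h 1) := by
  intro f g h
  rw [eq_inv_mul_iff_mul_eq₀ (pow_ne_zero m hchar), groupAlgebra_weak_counit_general hε,
    finsum_eq_sum_of_fintype]
  simp only [neg_add_eq_sub]
end

section
/- Let G be a finite abelian group (written multiplicatively, with unit e) and k a field with char k ∤ |G|. On the group algebra A = MonoidAlgebra k G with canonical basis {u_g : g ∈ G}, define Δ(u_g) = |G|^{−1} Σ_{u ∈ G} u_u ⊗ u_{u^{−1}g} and ε(u_g) = |G| if g = e and 0 otherwise. Then (A, Δ, ε) is a coassociative counital coalgebra, and Δ is multiplicative: Δ(x·y) = Δ(x)·Δ(y) for all x,y ∈ A. -/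
open Finset
open scoped TensorProduct

/-!
The comultiplication is `Δ x = E * (1 ⊗ x)` for the tensor `E = |G|⁻¹ ∑ u, u ⊗ u⁻¹`, which satisfies
`(a ⊗ 1) * E = E * (1 ⊗ a)` and is sent to `1` by multiplication. The first identity makes `Δ`
a bimodule map, and this gives coassociativity and reduces the counit laws to their value at `1`.
In a commutative algebra the first identity also gives `E * (a ⊗ b) = E * (1 ⊗ a * b)`, so `E` is
idempotent by the second, and then `Δ` is multiplicative.
-/

section Casimir

variable {R A : Type*} [CommSemiring R] [Semiring A] [Algebra R A]

/-- `E` is a Casimir element of `A ⊗ A`: it is central for the bimodule structure given by the left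
action on the first factor and the right action on the second. -/
def IsCasimir (E : A ⊗[R] A) : Prop :=
  ∀ a : A, (a ⊗ₜ[R] (1 : A)) * E = E * ((1 : A) ⊗ₜ[R] a)

/-- The comultiplication `x ↦ E * (1 ⊗ x)` attached to a tensor `E`. When `E` is a Casimir element
it is the `A`-bimodule map with value `E` at `1`. -/
def casimirComul (E : A ⊗[R] A) : A →ₗ[R] A ⊗[R] A :=
  LinearMap.mulLeft R E ∘ₗ (Algebra.TensorProduct.includeRight : A →ₐ[R] A ⊗[R] A).toLinearMap

theorem casimirComul_apply (E : A ⊗[R] A) (x : A) :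
    casimirComul E x = E * ((1 : A) ⊗ₜ[R] x) := rfl

theorem assoc_map_casimirComul_id (E t : A ⊗[R] A) :
    TensorProduct.assoc R A A A (TensorProduct.map (casimirComul E) LinearMap.id t) =
      Algebra.TensorProduct.assoc R R R A A A (E ⊗ₜ[R] (1 : A)) * ((1 : A) ⊗ₜ[R] t) := by
  induction t with
  | zero => simp
  | add s t hs ht => simp only [map_add, TensorProduct.tmul_add, mul_add, hs, ht]
  | tmul a b =>
    calc
      _ = Algebra.TensorProduct.assoc R R R A A A
            ((E ⊗ₜ[R] (1 : A)) * (((1 : A) ⊗ₜ[R] a) ⊗ₜ[R] b)) := by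
        rw [Algebra.TensorProduct.tmul_mul_tmul, one_mul]
        rfl
      _ = _ := by rw [map_mul, Algebra.TensorProduct.assoc_tmul]

theorem lid_map_id_mul_one_tmul (ε : A →ₗ[R] R) (t : A ⊗[R] A) (x : A) :
    TensorProduct.lid R A (TensorProduct.map ε LinearMap.id (t * ((1 : A) ⊗ₜ[R] x))) =
      TensorProduct.lid R A (TensorProduct.map ε LinearMap.id t) * x := by
  induction t with
  | zero => simp
  | add s t hs ht => simp only [add_mul, map_add, hs, ht]
  | tmul a b => simp

theorem rid_map_id_tmul_one_mul (ε : A →ₗ[R] R) (t : A ⊗[R] A) (x : A) :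
    TensorProduct.rid R A (TensorProduct.map LinearMap.id ε ((x ⊗ₜ[R] (1 : A)) * t)) =
      x * TensorProduct.rid R A (TensorProduct.map LinearMap.id ε t) := by
  induction t with
  | zero => simp
  | add s t hs ht => simp only [mul_add, map_add, hs, ht]
  | tmul a b => simp

theorem lid_map_casimirComul {E : A ⊗[R] A} {ε : A →ₗ[R] R}
    (hε : TensorProduct.lid R A (TensorProduct.map ε LinearMap.id E) = 1) (x : A) :
    TensorProduct.lid R A (TensorProduct.map ε LinearMap.id (casimirComul E x)) = x := by
  rw [casimirComul_apply, lid_map_id_mul_one_tmul, hε, one_mul]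

theorem casimirComul_mul_of_isIdempotentElem {A : Type*} [CommSemiring A] [Algebra R A]
    {E : A ⊗[R] A} (hE : IsIdempotentElem E) (x y : A) :
    casimirComul E (x * y) = casimirComul E x * casimirComul E y := by
  simp only [casimirComul_apply]
  rw [mul_mul_mul_comm, hE.eq, Algebra.TensorProduct.tmul_mul_tmul, one_mul]

namespace IsCasimir

variable {E : A ⊗[R] A}

theorem map_id_casimirComul (hE : IsCasimir E) (t : A ⊗[R] A) :
    TensorProduct.map LinearMap.id (casimirComul E) t =
      Algebra.TensorProduct.assoc R R R A A A (t ⊗ₜ[R] (1 : A)) * ((1 : A) ⊗ₜ[R] E) := by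
  induction t with
  | zero => simp
  | add s t hs ht => simp only [map_add, TensorProduct.add_tmul, add_mul, hs, ht]
  | tmul a b => simp [casimirComul_apply, ← hE b]

theorem casimirComul_coassoc (hE : IsCasimir E) (x : A) :
    TensorProduct.assoc R A A A
        (TensorProduct.map (casimirComul E) LinearMap.id (casimirComul E x)) =
      TensorProduct.map LinearMap.id (casimirComul E) (casimirComul E x) := by
  let α := Algebra.TensorProduct.assoc R R R A A A
  calc
    _ = α (E ⊗ₜ[R] (1 : A)) * ((1 : A) ⊗ₜ[R] (E * ((1 : A) ⊗ₜ[R] x))) :=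
      assoc_map_casimirComul_id E _
    _ = α (E ⊗ₜ[R] (1 : A)) * (((1 : A) ⊗ₜ[R] (x ⊗ₜ[R] (1 : A))) * ((1 : A) ⊗ₜ[R] E)) := by
      rw [← hE x, Algebra.TensorProduct.tmul_mul_tmul, one_mul]
    _ = α ((E * ((1 : A) ⊗ₜ[R] x)) ⊗ₜ[R] (1 : A)) * ((1 : A) ⊗ₜ[R] E) := by
      rw [← mul_assoc, ← Algebra.TensorProduct.assoc_tmul (R := R) (S := R) (T := R), ← map_mul,
        Algebra.TensorProduct.tmul_mul_tmul, one_mul]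
    _ = _ := (hE.map_id_casimirComul _).symm

theorem rid_map_casimirComul (hE : IsCasimir E) {ε : A →ₗ[R] R}
    (hε : TensorProduct.rid R A (TensorProduct.map LinearMap.id ε E) = 1) (x : A) :
    TensorProduct.rid R A (TensorProduct.map LinearMap.id ε (casimirComul E x)) = x := by
  rw [casimirComul_apply, ← hE x, rid_map_id_tmul_one_mul, hε, mul_one]

theorem mul_eq_mul_one_tmul_mul' {A : Type*} [CommSemiring A] [Algebra R A] {E : A ⊗[R] A}
    (hE : IsCasimir E) (t : A ⊗[R] A) :
    E * t = E * ((1 : A) ⊗ₜ[R] LinearMap.mul' R A t) := by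
  induction t with
  | zero => simp
  | add s t hs ht => simp only [map_add, TensorProduct.tmul_add, mul_add, hs, ht]
  | tmul a b =>
    calc
      E * (a ⊗ₜ[R] b) = (a ⊗ₜ[R] (1 : A)) * E * ((1 : A) ⊗ₜ[R] b) := by
        rw [mul_comm (a ⊗ₜ[R] (1 : A)) E, mul_assoc, Algebra.TensorProduct.tmul_mul_tmul,
          mul_one, one_mul]
      _ = E * ((1 : A) ⊗ₜ[R] (a * b)) := by
        rw [hE a, mul_assoc, Algebra.TensorProduct.tmul_mul_tmul, one_mul]

theorem isIdempotentElem {A : Type*} [CommSemiring A] [Algebra R A] {E : A ⊗[R] A}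
    (hE : IsCasimir E) (hμ : LinearMap.mul' R A E = 1) : IsIdempotentElem E := by
  rw [IsIdempotentElem, hE.mul_eq_mul_one_tmul_mul', hμ, ← Algebra.TensorProduct.one_def, mul_one]

end IsCasimir

end Casimir

section GroupAlgebra

variable {R G : Type*} [CommSemiring R] [Group G] [Fintype G]

/-- The tensor `c • ∑ u, u ⊗ u⁻¹` over the group algebra. For `c = |G|⁻¹` it is the separability
idempotent of the group algebra. -/
noncomputable def groupCasimir (c : R) : MonoidAlgebra R G ⊗[R] MonoidAlgebra R G :=
  c • ∑ u : G, MonoidAlgebra.single u (1 : R) ⊗ₜ[R] MonoidAlgebra.single u⁻¹ (1 : R)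

theorem casimirComul_groupCasimir_single (c : R) (g : G) :
    casimirComul (groupCasimir c) (MonoidAlgebra.single g 1) =
      c • ∑ u : G, MonoidAlgebra.single u (1 : R) ⊗ₜ[R]
        MonoidAlgebra.single (u⁻¹ * g) (1 : R) := by
  simp [casimirComul_apply, groupCasimir, Finset.sum_mul, MonoidAlgebra.single_mul_single]

theorem isCasimir_groupCasimir (c : R) : IsCasimir (groupCasimir (G := G) c) := by
  intro a
  induction a using MonoidAlgebra.induction_on with
  | of g =>
    rw [MonoidAlgebra.of_apply, ← casimirComul_apply, casimirComul_groupCasimir_single,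
      groupCasimir, mul_smul_comm, Finset.mul_sum]
    congr 1
    refine Fintype.sum_equiv (Equiv.mulLeft g) _ _ fun u => ?_
    simp [MonoidAlgebra.single_mul_single]
  | add a b ha hb => rw [TensorProduct.add_tmul, TensorProduct.tmul_add, add_mul, mul_add, ha, hb]
  | smul r a ha =>
    rw [← TensorProduct.smul_tmul', TensorProduct.tmul_smul, smul_mul_assoc, mul_smul_comm, ha]

theorem mul'_groupCasimir {c : R} (hc : c * (Fintype.card G : R) = 1) :
    LinearMap.mul' R (MonoidAlgebra R G) (groupCasimir (G := G) c) = 1 := by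
  simp [groupCasimir, MonoidAlgebra.single_mul_single, MonoidAlgebra.one_def, hc]

section Counit

variable [DecidableEq G] {c : R} {ε : MonoidAlgebra R G →ₗ[R] R}

theorem lid_map_groupCasimir (hc : c * (Fintype.card G : R) = 1)
    (hε : ∀ g : G, ε (MonoidAlgebra.single g 1) = if g = 1 then (Fintype.card G : R) else 0) :
    TensorProduct.lid R _ (TensorProduct.map ε LinearMap.id (groupCasimir c)) = 1 := by
  simp [groupCasimir, hε, hc, MonoidAlgebra.one_def]

theorem rid_map_groupCasimir (hc : c * (Fintype.card G : R) = 1)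
    (hε : ∀ g : G, ε (MonoidAlgebra.single g 1) = if g = 1 then (Fintype.card G : R) else 0) :
    TensorProduct.rid R _ (TensorProduct.map LinearMap.id ε (groupCasimir c)) = 1 := by
  simp [groupCasimir, hε, hc, MonoidAlgebra.one_def]

end Counit

end GroupAlgebra

theorem groupAlgebra_weakHopf_general_general {R : Type*} [CommSemiring R]
    {G : Type*} [CommGroup G] [Fintype G] [DecidableEq G]
    {c : R} (hc : c * (Fintype.card G : R) = 1)
    (Δ : MonoidAlgebra R G →ₗ[R] MonoidAlgebra R G ⊗[R] MonoidAlgebra R G)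
    (ε : MonoidAlgebra R G →ₗ[R] R)
    (hΔ : ∀ g : G,
      Δ (MonoidAlgebra.single g 1) = c •
        ∑ u : G, MonoidAlgebra.single u (1 : R) ⊗ₜ[R]
          MonoidAlgebra.single (u⁻¹ * g) (1 : R))
    (hε : ∀ g : G,
      ε (MonoidAlgebra.single g 1) = if g = 1 then (Fintype.card G : R) else 0) :
    (∀ x, TensorProduct.assoc R _ _ _ (TensorProduct.map Δ LinearMap.id (Δ x)) =
      TensorProduct.map LinearMap.id Δ (Δ x)) ∧
    (∀ x, TensorProduct.lid R _ (TensorProduct.map ε LinearMap.id (Δ x)) = x) ∧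
    (∀ x, TensorProduct.rid R _ (TensorProduct.map LinearMap.id ε (Δ x)) = x) ∧
    (∀ x y : MonoidAlgebra R G, Δ (x * y) = Δ x * Δ y) := by
  have hE : IsCasimir (groupCasimir (G := G) c) := isCasimir_groupCasimir c
  obtain rfl : Δ = casimirComul (groupCasimir c) := by
    ext g : 2
    simpa using (hΔ g).trans (casimirComul_groupCasimir_single c g).symm
  exact ⟨hE.casimirComul_coassoc,
    lid_map_casimirComul (lid_map_groupCasimir hc hε),
    hE.rid_map_casimirComul (rid_map_groupCasimir hc hε),
    casimirComul_mul_of_isIdempotentElem (hE.isIdempotentElem (mul'_groupCasimir hc))⟩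

/-- For a finite abelian group `G` and a field `k` with `char k ∤ |G|`, the maps
`Δ(u_g) = |G|⁻¹ Σ_u u_u ⊗ u_{u⁻¹g}` and `ε(u_g) = |G| δ_{g,e}` make the group
algebra `k[G]` a coassociative counital coalgebra, and `Δ` is multiplicative. -/
theorem groupAlgebra_weakHopf_general {k : Type*} [Field k]
    {G : Type*} [CommGroup G] [Fintype G] [DecidableEq G]
    (hchar : (Fintype.card G : k) ≠ 0)
    (Δ : MonoidAlgebra k G →ₗ[k] MonoidAlgebra k G ⊗[k] MonoidAlgebra k G)
    (ε : MonoidAlgebra k G →ₗ[k] k)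
    (hΔ : ∀ g : G,
      Δ (MonoidAlgebra.single g 1) = (Fintype.card G : k)⁻¹ •
        ∑ u : G, MonoidAlgebra.single u (1 : k) ⊗ₜ[k]
          MonoidAlgebra.single (u⁻¹ * g) (1 : k))
    (hε : ∀ g : G,
      ε (MonoidAlgebra.single g 1) = if g = 1 then (Fintype.card G : k) else 0) :
    (∀ x, TensorProduct.assoc k _ _ _ (TensorProduct.map Δ LinearMap.id (Δ x)) =
      TensorProduct.map LinearMap.id Δ (Δ x)) ∧
    (∀ x, TensorProduct.lid k _ (TensorProduct.map ε LinearMap.id (Δ x)) = x) ∧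
    (∀ x, TensorProduct.rid k _ (TensorProduct.map LinearMap.id ε (Δ x)) = x) ∧
    (∀ x y : MonoidAlgebra k G, Δ (x * y) = Δ x * Δ y) :=
  groupAlgebra_weakHopf_general_general (inv_mul_cancel₀ hchar) Δ ε hΔ hε
end
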